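/- arXiv:math/0408193 — 2 statements merged into one kernel-verified Lean document; each statement's English description precedes it below -/
import Mathlib

section
/- (Exact solution for the unit sphere satisfies the Dirichlet boundary condition.) Let k > 0 and let α ∈ ℝ³ be a unit vector. Define the coefficients c_l = −(2l+1)·i^l·j_l(k)/h_l(k) for each integer l ≥ 0. Then the total field u(x) = e^{ik⟨α,x⟩} + Σ_{l=0}^∞ c_l·P_l(⟨α,x⟩/|x|)·h_l(k|x|), with the series converging absolutely for |x| = 1, satisfies u(x) = 0 for every x ∈ ℝ³ with |x| = 1. -/
/-!
On the unit sphere the factor `h_l(k |x|)` cancels the denominator of `c_l`, so the scattered field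
becomes `-∑ (2 l + 1) i^l j_l(k) P_l(⟨α, x⟩)`. This is minus the incident wave, by the plane wave
expansion (`hasSum_planeWave`).

The cancellation needs `h_l(k) ≠ 0`. Up to a nonvanishing factor `h_l(t)` is a polynomial
`hankelPoly l` in `z = i / (2 t)`, and these satisfy `H_{l+2} = 2 (2 l + 3) z H_{l+1} + H_l`. As `z`
is purely imaginary, `Re (H_{l+1} * conj H_l)` does not depend on `l`; it equals `1`
(`hankelPoly_wronskian`), so no `H_l` vanishes.

The plane wave expansion comes from expanding the monomials `xⁿ / n!` in Legendre polynomials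
(`pow_div_factorial_eq_sum_legendreP`), an induction based on Bonnet's recursion (`mul_legendreP`,
obtained from Rodrigues' formula). Inserting this into the exponential series gives a double series
whose coefficients at `P_l` are those of the power series of `j_l`. It converges absolutely
because `|P_l| ≤ 3^l` on `[-1, 1]`, so the order of summation may be exchanged.
-/

open scoped BigOperators RealInnerProductSpace

/-- Spherical Hankel function of the first kind, normalized so `h l (k*r) ~ exp(i k r)/r`. -/
noncomputable def sphericalHankel (l : ℕ) (t : ℝ) : ℂ :=
  Complex.exp (Complex.I * t) / t *
    ∑ m ∈ Finset.range (l + 1),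
      Complex.I ^ m * (Nat.factorial (l + m) : ℂ) /
        ((Nat.factorial m : ℂ) * (Nat.factorial (l - m) : ℂ) * (2 * (t : ℂ)) ^ m)

/-- Spherical Bessel function of the first kind. -/
noncomputable def sphericalBessel (l : ℕ) (t : ℝ) : ℝ :=
  ∑' n : ℕ, (-1 : ℝ) ^ n * t ^ (2 * n + l) /
    (2 ^ n * Nat.factorial n * Nat.doubleFactorial (2 * l + 2 * n + 1))

/-- Legendre polynomial via Rodrigues' formula. -/
noncomputable def legendreP (l : ℕ) (x : ℝ) : ℝ :=
  (1 / (2 ^ l * Nat.factorial l : ℝ)) * iteratedDeriv l (fun y : ℝ => (y ^ 2 - 1) ^ l) x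


/-! ### Legendre polynomials -/

section Legendre

open Polynomial

lemma iteratedDeriv_polynomial_eval (p : ℝ[X]) (n : ℕ) :
    iteratedDeriv n (fun y => p.eval y) = fun y => (derivative^[n] p).eval y := by
  induction n with
  | zero => simp
  | succ n ih =>
    rw [iteratedDeriv_succ, ih]
    funext y
    rw [Polynomial.deriv, Function.iterate_succ_apply']

/-- `rodrigues n = Dⁿ (X² - 1)ⁿ`, that is `2ⁿ n!` times the `n`-th Legendre polynomial. -/
noncomputable def rodrigues (n : ℕ) : ℝ[X] := derivative^[n] ((X ^ 2 - 1) ^ n)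

lemma legendreP_eq_eval (l : ℕ) (x : ℝ) :
    legendreP l x = (rodrigues l).eval x / (2 ^ l * Nat.factorial l) := by
  have h := congrFun (iteratedDeriv_polynomial_eval ((X ^ 2 - 1) ^ l) l) x
  simp only [eval_pow, eval_sub, eval_X, eval_one] at h
  rw [legendreP, h, rodrigues]
  ring

lemma derivative_sq_sub_one_pow (n : ℕ) :
    derivative ((X ^ 2 - 1 : ℝ[X]) ^ (n + 1)) =
      ((2 * (n + 1) : ℕ) : ℝ[X]) * ((X ^ 2 - 1) ^ n * X) := by
  simp only [derivative_pow, derivative_sub, derivative_X, derivative_one, map_natCast]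
  push_cast
  simp
  ring

/-- Bonnet's recursion for the unnormalized polynomials. Besides the Rodrigues polynomials, the
Leibniz rule produces the lower order derivatives `Dⁿ (X² - 1)ⁿ⁺¹`. These are eliminated by
computing them in two ways: from the derivative of the power `(X² - 1)ⁿ⁺¹`, and from the product
of `X² - 1` and `(X² - 1)ⁿ`. -/
lemma rodrigues_bonnet (n : ℕ) :
    rodrigues (n + 2) = 2 * (2 * (n : ℝ[X]) + 3) * X * rodrigues (n + 1)
      - 4 * ((n : ℝ[X]) + 1) ^ 2 * rodrigues n := by
  have step (m : ℕ) : rodrigues (m + 1) =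
      2 * ((m : ℝ[X]) + 1) * (X * rodrigues m
        + (m : ℝ[X]) * derivative^[m - 1] ((X ^ 2 - 1 : ℝ[X]) ^ m)) := by
    rw [rodrigues, Function.iterate_succ_apply, derivative_sq_sub_one_pow,
      iterate_derivative_natCast_mul, iterate_derivative_mul_X, ← rodrigues]
    simp only [nsmul_eq_mul]
    push_cast
    ring
  rcases n with _ | m
  · have h1 := step 0
    have h2 := step 1
    simp [rodrigues] at h1 h2 ⊢
    rw [h2]; ring
  · have h1 := step (m + 1)
    have h2 := step (m + 2)
    simp only [Nat.add_sub_cancel, show m + 2 - 1 = m + 1 from rfl] at h1 h2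
    have h3 : derivative^[m + 1] ((X ^ 2 - 1 : ℝ[X]) ^ (m + 2)) =
        2 * ((m : ℝ[X]) + 2) * (X * derivative^[m] ((X ^ 2 - 1 : ℝ[X]) ^ (m + 1))
          + (m : ℝ[X]) * derivative^[m - 1] ((X ^ 2 - 1 : ℝ[X]) ^ (m + 1))) := by
      rw [Function.iterate_succ_apply, derivative_sq_sub_one_pow (m + 1),
        iterate_derivative_natCast_mul, iterate_derivative_mul_X]
      simp only [nsmul_eq_mul]
      push_cast
      ring
    have h4 : derivative^[m + 1] ((X ^ 2 - 1 : ℝ[X]) ^ (m + 2)) =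
        (X ^ 2 - 1) * rodrigues (m + 1) + 2 * ((m : ℝ[X]) + 1) * X *
          derivative^[m] ((X ^ 2 - 1 : ℝ[X]) ^ (m + 1))
        + ((m : ℝ[X]) + 1) * ((m : ℝ[X]) * derivative^[m - 1] ((X ^ 2 - 1 : ℝ[X]) ^ (m + 1))) := by
      rw [show (X ^ 2 - 1 : ℝ[X]) ^ (m + 2) =
        (X ^ 2 - 1) ^ (m + 1) * X * X - (X ^ 2 - 1) ^ (m + 1) by ring,
        iterate_derivative_sub, iterate_derivative_mul_X, iterate_derivative_mul_X,
        Nat.add_sub_cancel, iterate_derivative_mul_X, ← rodrigues]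
      simp only [nsmul_eq_mul]
      push_cast
      ring
    push_cast at h1 h2 ⊢
    generalize derivative^[m + 1] ((X ^ 2 - 1 : ℝ[X]) ^ (m + 2)) = B2 at *
    generalize (m : ℝ[X]) * derivative^[m - 1] ((X ^ 2 - 1 : ℝ[X]) ^ (m + 1)) = C0 at *
    generalize derivative^[m] ((X ^ 2 - 1 : ℝ[X]) ^ (m + 1)) = B1 at *
    -- `2(m+2)·h4 - (m+1)·h3` cancels the second order remainder `C0`.
    linear_combination h2 + (2 * (m : ℝ[X]) + 4) * (2 * (m + 2) * h4 - (m + 1) * h3)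
      - (2 * (m : ℝ[X]) + 4) * X * h1

/-- Bonnet's recursion, solved for `x P_{l}(x)`. At `l = 0` the truncated index `l - 1` is
harmless because of the factor `l`. -/
lemma mul_legendreP (l : ℕ) (x : ℝ) :
    (2 * (l : ℝ) + 1) * (x * legendreP l x) =
      (l + 1) * legendreP (l + 1) x + l * legendreP (l - 1) x := by
  rcases l with _ | n
  · simp [legendreP_eq_eval, rodrigues]
    ring
  · have h := congrArg (Polynomial.eval x) (rodrigues_bonnet n)
    simp only [eval_sub, eval_mul, eval_add, eval_X, eval_natCast, eval_pow, eval_ofNat,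
      eval_one] at h
    simp only [Nat.add_sub_cancel, legendreP_eq_eval, Nat.factorial_succ, pow_succ]
    rw [h]
    have := Nat.factorial_ne_zero n
    push_cast
    field_simp
    ring

/-- A crude bound, immediate from Bonnet's recursion; the optimal bound is `1`. -/
lemma abs_legendreP_le {x : ℝ} (hx : |x| ≤ 1) (l : ℕ) : |legendreP l x| ≤ 3 ^ l := by
  induction l using Nat.strong_induction_on with
  | _ l ih =>
    rcases l with _ | l
    · simp [legendreP_eq_eval, rodrigues]
    · have h := mul_legendreP l x
      have hl : (0 : ℝ) < l + 1 := by positivity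
      have h1 := ih l (by omega)
      have h2 : |legendreP (l - 1) x| ≤ 3 ^ l :=
        (ih (l - 1) (by omega)).trans (pow_le_pow_right₀ (by norm_num) (by omega))
      have h3 : |x * legendreP l x| ≤ 3 ^ l := by
        rw [abs_mul]
        calc _ ≤ 1 * (3 : ℝ) ^ l := by gcongr
          _ = _ := one_mul _
      have h4 : (l + 1) * |legendreP (l + 1) x| ≤ (l + 1) * (3 : ℝ) ^ (l + 1) := by
        rw [← abs_of_pos hl, ← abs_mul, abs_of_pos hl]
        rw [show ((l : ℝ) + 1) * legendreP (l + 1) x = (2 * (l : ℝ) + 1) * (x * legendreP l x)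
          - l * legendreP (l - 1) x by linarith]
        refine (abs_sub _ _).trans ?_
        rw [abs_mul _ (x * _), abs_mul (l : ℝ), abs_of_nonneg (by positivity : (0 : ℝ) ≤ 2 * l + 1),
          abs_of_nonneg (by positivity : (0 : ℝ) ≤ l)]
        calc _ ≤ (2 * (l : ℝ) + 1) * 3 ^ l + l * 3 ^ l := by gcongr
          _ ≤ _ := by
            rw [pow_succ]
            have : (0 : ℝ) < 3 ^ l := by positivity
            nlinarith
      exact le_of_mul_le_mul_left h4 hl

end Legendre

/-! ### Non-vanishing of the spherical Hankel functions -/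

/-- The polynomial factor of the spherical Hankel function, in the variable `z = i / (2 t)`.
The coefficient `(l + m)! / (m! (l - m)!)` is written as `(2 m)! / m! * (l + m).choose (2 m)`,
which vanishes for `m > l`. -/
noncomputable def hankelPoly (l : ℕ) (z : ℂ) : ℂ :=
  ∑ m ∈ Finset.range (l + 1),
    ((m + 1).ascFactorial m : ℂ) * ((l + m).choose (2 * m) : ℂ) * z ^ m

lemma sphericalHankel_eq (l : ℕ) (t : ℝ) :
    sphericalHankel l t = Complex.exp (Complex.I * t) / t * hankelPoly l (Complex.I / (2 * t)) := by
  rw [sphericalHankel, hankelPoly]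
  congr 1
  refine Finset.sum_congr rfl fun m hm => ?_
  have hml : m ≤ l := by simpa [Nat.lt_succ_iff] using hm
  have h1 : ((l + m).choose (2 * m) : ℂ) * (Nat.factorial (2 * m)) * Nat.factorial (l - m)
      = Nat.factorial (l + m) := by
    have := Nat.choose_mul_factorial_mul_factorial (show 2 * m ≤ l + m by omega)
    rw [show l + m - 2 * m = l - m by omega] at this
    exact_mod_cast this
  have h2 : (Nat.factorial m : ℂ) * (m + 1).ascFactorial m = Nat.factorial (2 * m) := by
    have := Nat.factorial_mul_ascFactorial m m
    rw [← two_mul] at this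
    exact_mod_cast this
  rw [← h1, ← h2, div_pow]
  have h3 : (Nat.factorial m : ℂ) ≠ 0 := by exact_mod_cast Nat.factorial_ne_zero m
  have h4 : (Nat.factorial (l - m) : ℂ) ≠ 0 := by exact_mod_cast Nat.factorial_ne_zero _
  by_cases ht : (2 * (t : ℂ)) ^ m = 0
  · simp [ht]
  · field_simp

lemma hankelPoly_eq_of_le {l N : ℕ} (h : l + 1 ≤ N) (z : ℂ) :
    hankelPoly l z = ∑ m ∈ Finset.range N,
      ((m + 1).ascFactorial m : ℂ) * ((l + m).choose (2 * m) : ℂ) * z ^ m := by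
  refine Finset.sum_subset (Finset.range_mono h) fun m _ hm => ?_
  rw [Nat.choose_eq_zero_of_lt (by simp at hm; omega)]
  simp

lemma hankelPoly_coeff_rec (l m : ℕ) :
    (m + 2).ascFactorial (m + 1) * (l + 2 + (m + 1)).choose (2 * (m + 1)) =
      2 * (2 * l + 3) * ((m + 1).ascFactorial m * (l + 1 + m).choose (2 * m))
      + (m + 2).ascFactorial (m + 1) * (l + (m + 1)).choose (2 * (m + 1)) := by
  have key : (l + 2 + (m + 1)).choose (2 * (m + 1)) = 2 * (l + m + 1).choose (2 * m + 1)
      + (l + m + 1).choose (2 * m) + (l + (m + 1)).choose (2 * (m + 1)) := by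
    rw [show l + 2 + (m + 1) = l + m + 1 + 1 + 1 by ring, show 2 * (m + 1) = 2 * m + 1 + 1 by ring,
      Nat.choose_succ_succ, Nat.choose_succ_succ, Nat.choose_succ_succ (l + m + 1) (2 * m + 1),
      show l + (m + 1) = l + m + 1 by ring]
    ring
  have h2 : (m + 2).ascFactorial (m + 1) = 2 * (2 * m + 1) * (m + 1).ascFactorial m := by
    have h := Nat.factorial_mul_ascFactorial (m + 1) (m + 1)
    have h' := Nat.factorial_mul_ascFactorial m m
    rw [show m + 1 + (m + 1) = m + m + 1 + 1 by ring, Nat.factorial_succ, Nat.factorial_succ,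
      Nat.factorial_succ, ← h'] at h
    have : (m + 1) * Nat.factorial m ≠ 0 := by positivity
    apply Nat.eq_of_mul_eq_mul_left (Nat.pos_of_ne_zero this)
    rw [h]; ring
  have h3 : (l + m + 1).choose (2 * m + 1) * (2 * m + 1) + (l + m + 1).choose (2 * m) * (2 * m)
      = (l + m + 1).choose (2 * m) * (l + m + 1) := by
    rw [Nat.choose_succ_right_eq]
    rcases le_or_gt (2 * m) (l + m + 1) with h | h
    · rw [← mul_add, Nat.sub_add_cancel h]
    · simp [Nat.choose_eq_zero_of_lt h]
  rw [key, h2, show l + 1 + m = l + m + 1 by ring]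
  zify at h3 ⊢
  linear_combination (4 * ((m + 1).ascFactorial m : ℤ)) * h3

lemma hankelPoly_rec (l : ℕ) (z : ℂ) :
    hankelPoly (l + 2) z = 2 * (2 * l + 3) * z * hankelPoly (l + 1) z + hankelPoly l z := by
  rw [hankelPoly, Finset.sum_range_succ', hankelPoly,
    hankelPoly_eq_of_le (show l + 1 ≤ l + 2 + 1 by omega), Finset.sum_range_succ' _ (l + 2),
    Finset.mul_sum, ← add_assoc, ← Finset.sum_add_distrib]
  congr 1
  · refine Finset.sum_congr rfl fun m _ => ?_
    have := congrArg (Nat.cast (R := ℂ)) (hankelPoly_coeff_rec l m)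
    push_cast at this
    rw [show m + 1 + 1 = m + 2 from rfl]
    linear_combination z ^ (m + 1) * this
  · simp

/-- A discrete Wronskian of two consecutive spherical Hankel functions. -/
lemma hankelPoly_wronskian (s : ℝ) (l : ℕ) :
    (hankelPoly (l + 1) (Complex.I * s) * starRingEnd ℂ (hankelPoly l (Complex.I * s))).re = 1 := by
  induction l with
  | zero => simp [hankelPoly, Finset.sum_range_succ]
  | succ l ih =>
    rw [hankelPoly_rec]
    generalize hankelPoly (l + 1) (Complex.I * s) = a at *
    generalize hankelPoly l (Complex.I * s) = b at *
    simp at ih ⊢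
    linarith

lemma sphericalHankel_ne_zero (l : ℕ) {t : ℝ} (ht : 0 < t) : sphericalHankel l t ≠ 0 := by
  rw [sphericalHankel_eq]
  have h := hankelPoly_wronskian (1 / (2 * t)) l
  have hz : Complex.I * ((1 / (2 * t) : ℝ) : ℂ) = Complex.I / (2 * t) := by
    push_cast; ring
  rw [hz] at h
  refine mul_ne_zero (div_ne_zero (Complex.exp_ne_zero _) (by exact_mod_cast ht.ne')) fun h0 => ?_
  simp [h0] at h

/-! ### The plane wave expansion -/

/-- The number `d n l` for which `xⁿ / n! = ∑_{l ≤ n} (2 l + 1) (d n l) P_l(x)`. With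
`n = l + 2 s` it equals `1 / (2^s s! (2 l + 2 s + 1)!!)`, the absolute value of the coefficient
of `tⁿ` in `j_l(t)`, and it vanishes when `n - l` is negative or odd. -/
noncomputable def besselCoeff (n l : ℕ) : ℝ :=
  if l ≤ n ∧ Even (n - l) then
    1 / (2 ^ ((n - l) / 2) * Nat.factorial ((n - l) / 2) * Nat.doubleFactorial (n + l + 1))
  else 0

lemma besselCoeff_add (l s : ℕ) : besselCoeff (l + 2 * s) l =
    1 / (2 ^ s * Nat.factorial s * Nat.doubleFactorial (2 * l + 2 * s + 1)) := by
  rw [besselCoeff, if_pos ⟨by omega, by simp⟩, show (l + 2 * s - l) / 2 = s by omega,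
    show l + 2 * s + l + 1 = 2 * l + 2 * s + 1 by ring]

lemma besselCoeff_eq_zero {n l : ℕ} (h : ∀ s, n ≠ l + 2 * s) : besselCoeff n l = 0 := by
  rw [besselCoeff, if_neg]
  rintro ⟨h1, r, hr⟩
  exact h r (by omega)

/-- The coefficient identity behind the derivative formula
`(2 l + 1) (d/dt) j_l = l j_{l-1} - (l + 1) j_{l+1}`. -/
lemma besselCoeff_rec (n l : ℕ) :
    (n + 1) * ((2 * l + 1) * besselCoeff (n + 1) l) =
      l * besselCoeff n (l - 1) + (l + 1) * besselCoeff n (l + 1) := by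
  by_cases h : ∃ s, n + 1 = l + 2 * s
  · obtain ⟨s, hs⟩ := h
    rw [hs, besselCoeff_add]
    have hn : (n : ℝ) + 1 = l + 2 * s := by exact_mod_cast hs
    rw [hn]
    have e1 : (l : ℝ) * besselCoeff n (l - 1) = l * (2 * l + 2 * s + 1) *
        (1 / (2 ^ s * Nat.factorial s * Nat.doubleFactorial (2 * l + 2 * s + 1))) := by
      rcases l with _ | l
      · simp
      · have hn' : n = l + 2 * s := by omega
        rw [Nat.add_sub_cancel, hn', besselCoeff_add,
          show 2 * (l + 1) + 2 * s + 1 = 2 * l + 2 * s + 1 + 2 by ring,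
          Nat.doubleFactorial_add_two]
        have := (Nat.doubleFactorial_pos (2 * l + 2 * s + 1)).ne'
        have := Nat.factorial_ne_zero s
        push_cast
        field_simp
        ring
    have e2 : ((l : ℝ) + 1) * besselCoeff n (l + 1) = (l + 1) * (2 * s) *
        (1 / (2 ^ s * Nat.factorial s * Nat.doubleFactorial (2 * l + 2 * s + 1))) := by
      rcases s with _ | s
      · rw [besselCoeff_eq_zero (by omega)]
        simp
      · have hn' : n = l + 1 + 2 * s := by omega
        rw [hn', besselCoeff_add,
          show 2 * (l + 1) + 2 * s + 1 = 2 * l + 2 * (s + 1) + 1 by ring,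
          Nat.factorial_succ, pow_succ]
        have := (Nat.doubleFactorial_pos (2 * l + 2 * (s + 1) + 1)).ne'
        have := Nat.factorial_ne_zero s
        push_cast
        field_simp
    rw [e1, e2]
    ring
  · push Not at h
    rw [besselCoeff_eq_zero h, besselCoeff_eq_zero (l := l + 1) (fun s hs => h (s + 1) (by omega))]
    rcases l with _ | l
    · simp
    · rw [besselCoeff_eq_zero (l := l + 1 - 1) (fun s hs => h s (by omega))]
      simp

/-- Expansion of monomials in Legendre polynomials. -/
lemma pow_div_factorial_eq_sum_legendreP (x : ℝ) (n : ℕ) :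
    x ^ n / Nat.factorial n =
      ∑ l ∈ Finset.range (n + 1), (2 * (l : ℝ) + 1) * besselCoeff n l * legendreP l x := by
  induction n with
  | zero =>
    have := besselCoeff_add 0 0
    simp at this
    simp [this, legendreP]
  | succ n ih =>
    have hn : (n : ℝ) + 1 ≠ 0 := by positivity
    apply mul_left_cancel₀ hn
    have hL : ((n : ℝ) + 1) * (x ^ (n + 1) / Nat.factorial (n + 1)) =
        x * (x ^ n / Nat.factorial n) := by
      have := Nat.factorial_ne_zero n
      rw [Nat.factorial_succ, pow_succ]
      push_cast
      field_simp
    have hl (l : ℕ) : x * ((2 * (l : ℝ) + 1) * besselCoeff n l * legendreP l x) =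
        (l + 1) * besselCoeff n l * legendreP (l + 1) x
          + l * besselCoeff n l * legendreP (l - 1) x := by
      linear_combination besselCoeff n l * mul_legendreP l x
    have hr (l : ℕ) : ((n : ℝ) + 1) * ((2 * (l : ℝ) + 1) * besselCoeff (n + 1) l * legendreP l x)
        = l * besselCoeff n (l - 1) * legendreP l x
          + (l + 1) * besselCoeff n (l + 1) * legendreP l x := by
      linear_combination legendreP l x * besselCoeff_rec n l
    rw [hL, ih, Finset.mul_sum, Finset.mul_sum]
    simp only [hl, hr, Finset.sum_add_distrib]
    congr 1
    · rw [Finset.sum_range_succ' _ (n + 1)]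
      simp
    · rw [Finset.sum_range_succ', Finset.sum_range_succ _ (n + 1), Finset.sum_range_succ _ n,
        besselCoeff_eq_zero (n := n) (l := n + 1) (by omega),
        besselCoeff_eq_zero (n := n) (l := n + 1 + 1) (by omega)]
      simp

/-- The general term of the double series `∑_{n,l} (i k)ⁿ (2 l + 1) (d n l) P_l(x)`. Summing over
`l` first gives the exponential series of `i k x`, summing over `n` first gives the expansion in
spherical waves. -/
noncomputable def waveTerm (k x : ℝ) (n l : ℕ) : ℂ :=
  (Complex.I * k) ^ n * (((2 * (l : ℝ) + 1) * besselCoeff n l * legendreP l x : ℝ) : ℂ)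

lemma factorial_mul_le_doubleFactorial (l s : ℕ) :
    (2 * l + 1) * Nat.factorial l ≤ Nat.doubleFactorial (2 * l + 2 * s + 1) := by
  induction s with
  | zero =>
    induction l with
    | zero => simp
    | succ l ih =>
      rw [show 2 * (l + 1) + 2 * 0 + 1 = 2 * l + 2 * 0 + 1 + 2 by ring,
        Nat.doubleFactorial_add_two, Nat.factorial_succ]
      nlinarith [Nat.factorial_pos l]
  | succ s ih =>
    rw [show 2 * l + 2 * (s + 1) + 1 = 2 * l + 2 * s + 1 + 2 by ring, Nat.doubleFactorial_add_two]
    exact ih.trans (Nat.le_mul_of_pos_left _ (by omega))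

lemma norm_waveTerm_le {k : ℝ} (hk : 0 < k) {x : ℝ} (hx : |x| ≤ 1) (l s : ℕ) :
    ‖waveTerm k x (l + 2 * s) l‖ ≤
      (3 * k) ^ l / Nat.factorial l * ((k ^ 2) ^ s / Nat.factorial s) := by
  have hP := abs_legendreP_le hx l
  have hD : ((2 * (l : ℝ) + 1) * Nat.factorial l) ≤ Nat.doubleFactorial (2 * l + 2 * s + 1) := by
    exact_mod_cast factorial_mul_le_doubleFactorial l s
  have h2 : (1 : ℝ) ≤ 2 ^ s := one_le_pow₀ (by norm_num)
  have hl : (0 : ℝ) < Nat.factorial l := by positivity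
  have hs : (0 : ℝ) < Nat.factorial s := by positivity
  have hpos : (0 : ℝ) < 2 * l + 1 := by positivity
  rw [waveTerm, norm_mul, norm_pow, norm_mul, Complex.norm_I, one_mul, Complex.norm_real,
    Complex.norm_real, Real.norm_eq_abs, Real.norm_eq_abs, abs_of_pos hk, besselCoeff_add,
    abs_mul, abs_of_nonneg (by positivity)]
  calc k ^ (l + 2 * s) * ((2 * (l : ℝ) + 1) *
        (1 / (2 ^ s * Nat.factorial s * Nat.doubleFactorial (2 * l + 2 * s + 1)))
          * |legendreP l x|)
      ≤ k ^ (l + 2 * s) * ((2 * (l : ℝ) + 1) *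
        (1 / (1 * Nat.factorial s * ((2 * (l : ℝ) + 1) * Nat.factorial l))) * 3 ^ l) := by
        gcongr
    _ = _ := by
        rw [pow_add, pow_mul, mul_pow]
        field_simp

lemma waveTerm_eq_zero {k x : ℝ} {n l : ℕ} (h : ∀ s, n ≠ l + 2 * s) : waveTerm k x n l = 0 := by
  simp [waveTerm, besselCoeff_eq_zero h]

lemma summable_waveTerm {k : ℝ} (hk : 0 < k) {x : ℝ} (hx : |x| ≤ 1) :
    Summable (Function.uncurry (waveTerm k x)) := by
  have hinj : Function.Injective (fun p : ℕ × ℕ => (p.1 + 2 * p.2, p.1)) := by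
    rintro ⟨a, b⟩ ⟨c, d⟩ h
    simp only [Prod.mk.injEq] at h ⊢
    omega
  rw [← hinj.summable_iff]
  · refine Summable.of_norm_bounded
      ((Real.summable_pow_div_factorial (3 * k)).mul_of_nonneg
        (Real.summable_pow_div_factorial (k ^ 2)) (fun n => ?_) (fun n => ?_))
      fun p => norm_waveTerm_le hk hx p.1 p.2
    · simp only [Pi.zero_apply]; positivity
    · simp only [Pi.zero_apply]; positivity
  · rintro ⟨n, l⟩ h
    refine waveTerm_eq_zero fun s hs => h ⟨(l, s), ?_⟩
    exact Prod.ext hs.symm rfl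

lemma tsum_waveTerm_left (k x : ℝ) (l : ℕ) : ∑' n, waveTerm k x n l =
    (2 * (l : ℂ) + 1) * Complex.I ^ l * (sphericalBessel l k : ℂ) * (legendreP l x : ℂ) := by
  have hinj : Function.Injective (fun s : ℕ => l + 2 * s) := fun a b h => by
    simp only at h
    omega
  rw [← hinj.tsum_eq (f := fun n => waveTerm k x n l)]
  · rw [sphericalBessel, Complex.ofReal_tsum, mul_right_comm, ← tsum_mul_left]
    refine tsum_congr fun s => ?_
    simp only [waveTerm, besselCoeff_add]
    push_cast
    rw [mul_pow, pow_add Complex.I, pow_mul Complex.I, Complex.I_sq, add_comm (2 * s) l]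
    ring
  · intro n hn
    by_contra h
    exact hn (waveTerm_eq_zero fun s hs => h ⟨s, hs.symm⟩)

lemma tsum_waveTerm_right (k x : ℝ) (n : ℕ) :
    ∑' l, waveTerm k x n l = (Complex.I * k * x) ^ n / Nat.factorial n := by
  rw [tsum_eq_sum (s := Finset.range (n + 1))]
  · simp only [waveTerm]
    rw [← Finset.mul_sum, ← Complex.ofReal_sum, ← pow_div_factorial_eq_sum_legendreP]
    push_cast
    rw [mul_pow _ (x : ℂ)]
    ring
  · intro l hl
    exact waveTerm_eq_zero fun s hs => hl (by simp; omega)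

/-- The plane wave expansion
`e^{ikx} = ∑_l (2 l + 1) i^l j_l(k) P_l(x)` for `-1 ≤ x ≤ 1`. -/
lemma hasSum_planeWave {k : ℝ} (hk : 0 < k) {x : ℝ} (hx : |x| ≤ 1) :
    HasSum (fun l : ℕ => (2 * (l : ℂ) + 1) * Complex.I ^ l * (sphericalBessel l k : ℂ)
      * (legendreP l x : ℂ)) (Complex.exp (Complex.I * k * x)) := by
  have hs := summable_waveTerm hk hx
  have hexp : Complex.exp (Complex.I * k * x) = ∑' l, ∑' n, waveTerm k x n l := by
    rw [hs.tsum_comm, Complex.exp_eq_exp_ℂ, NormedSpace.exp_eq_tsum_div]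
    exact tsum_congr fun n => (tsum_waveTerm_right k x n).symm
  have hsum : Summable fun l => ∑' n, waveTerm k x n l := hs.prod_symm.prod
  rw [hexp]
  simpa only [tsum_waveTerm_left] using hsum.hasSum

/-- Exact solution for the unit sphere: with `c_l = −(2l+1)·i^l·j_l(k)/h_l(k)`, the total
field `u(x) = e^{ik⟨α,x⟩} + Σ_l c_l·P_l(⟨α,x⟩/|x|)·h_l(k|x|)` converges absolutely on the
unit sphere and vanishes there (Dirichlet boundary condition). -/
theorem unit_sphere_total_field_vanishes (k : ℝ) (hk : 0 < k)
    (α : EuclideanSpace ℝ (Fin 3)) (hα : ‖α‖ = 1)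
    (c : ℕ → ℂ)
    (hc : c = fun l : ℕ => -((2 * (l : ℂ) + 1) * Complex.I ^ l * (sphericalBessel l k : ℂ)
      / sphericalHankel l k))
    (x : EuclideanSpace ℝ (Fin 3)) (hx : ‖x‖ = 1) :
    Summable (fun l : ℕ =>
      ‖c l * (legendreP l (⟪α, x⟫ / ‖x‖) : ℂ) * sphericalHankel l (k * ‖x‖)‖) ∧
    Complex.exp (Complex.I * k * ⟪α, x⟫) +
      ∑' l : ℕ, c l * (legendreP l (⟪α, x⟫ / ‖x‖) : ℂ) * sphericalHankel l (k * ‖x‖) = 0 := by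
  have hterm (l : ℕ) : c l * (legendreP l (⟪α, x⟫ / ‖x‖) : ℂ) * sphericalHankel l (k * ‖x‖) =
      -((2 * (l : ℂ) + 1) * Complex.I ^ l * (sphericalBessel l k : ℂ)
        * (legendreP l ⟪α, x⟫ : ℂ)) := by
    have := sphericalHankel_ne_zero l hk
    rw [hc, hx, div_one, mul_one]
    field_simp
  have hle : |⟪α, x⟫| ≤ 1 := by
    simpa [hα, hx] using abs_real_inner_le_norm α x
  have h := (hasSum_planeWave hk hle).neg
  simp only [hterm]
  refine ⟨h.summable.norm, ?_⟩
  rw [h.tsum_eq, add_neg_cancel]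
end

section
/- (Addition theorem for spherical harmonics.) For every integer l ≥ 0 and all angles θ, θ' ∈ [0,π], φ, φ' ∈ [0,2π], one has Σ_{m=−l}^{l} Y_{lm}(θ,φ)·\overline{Y_{lm}(θ',φ')} = ((2l+1)/(4π))·P_l( cos θ cos θ' + sin θ sin θ' cos(φ − φ') ). -/
/-!
The proof goes through the invariant pairing of binary forms of degree `2l`.

By Taylor's formula, `P_l^{(m)}(x)` is, up to the factor `(l+m)! / (2^l l!)`, the coefficient of
`X^{l+m}` in `((X + x)² - 1)^l`. A quadratic `a + 2x X + c X²` with `a c = x² - 1` differs from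
`(X + x)² - 1` only by rescaling, so the coefficients of its `l`-th power at `l ± m` are
`c^m` or `a^m` times the same multiple of `P_l^{(m)}(x)` (`coeff_quadPoly_legendre` and
`coeff_quadPoly_legendre_symm`); the central coefficient is `2^l P_l(x)`.

Let `s = sin θ`, `x = cos θ`, `s' = sin θ'`, `y = cos θ'`, `e = exp (i(φ - φ'))`, and take the
quadratics `q₁ = -i s e⁻¹ + 2x X - i s e X²` and `q₂ = i s' + 2y X + i s' X²`. The sum over `m` is
then a weighted sum of products of the coefficients of `q₁^l` and `q₂^l`, with weights
`j! (2l - j)!`. With `c = cos (θ'/2)` and `σ = sin (θ'/2)` one has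
`q₂ = 2 (iσ + c X)(c + iσ X)`, and for a product of two `l`-th powers of linear forms this weighted
sum is `l!²` times a central coefficient after a linear substitution in the homogenization of
`q₁^l` (`coeff_pairing`, `quadPoly_hom_pow`). The substitution turns `q₁` into a quadratic
`A + 2Z X + D X²` with `Z = x y + s s' cos (φ - φ')`. It preserves the discriminant, hence
`A D = Z² - 1`, and the central coefficient is `2^l P_l(Z)` (`legendreP_eq_sum_coeff`).
-/

open scoped BigOperators

/-- `Θ_{lm}` in the definition of the spherical harmonics. -/
noncomputable def thetaLM (l : ℕ) (m : ℤ) (x : ℝ) : ℝ :=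
  if 0 ≤ m then
    Real.sqrt ((2 * l + 1) / 2 * (Nat.factorial (l - m.toNat) : ℝ) /
        (Nat.factorial (l + m.toNat) : ℝ)) *
      Real.sqrt (1 - x ^ 2) ^ m.toNat * iteratedDeriv m.toNat (legendreP l) x
  else
    (-1 : ℝ) ^ (-m).toNat *
      (Real.sqrt ((2 * l + 1) / 2 * (Nat.factorial (l - (-m).toNat) : ℝ) /
          (Nat.factorial (l + (-m).toNat) : ℝ)) *
        Real.sqrt (1 - x ^ 2) ^ (-m).toNat * iteratedDeriv (-m).toNat (legendreP l) x)

/-- Spherical harmonic `Y_{lm}(θ,φ) = (1/√(2π)) e^{imφ} Θ_{lm}(cos θ)`. -/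
noncomputable def sphericalHarmonic (l : ℕ) (m : ℤ) (θ φ : ℝ) : ℂ :=
  ((1 / Real.sqrt (2 * Real.pi) : ℝ) : ℂ) * Complex.exp (Complex.I * m * φ) *
    ((thetaLM l m (Real.cos θ) : ℝ) : ℂ)

open Polynomial

/-! ### Powers of a quadratic polynomial -/

/-- The quadratic polynomial `a + b X + c X²`. -/
noncomputable def quadPoly {R : Type*} [CommRing R] (a b c : R) : R[X] :=
  C a + C b * X + C c * X ^ 2

lemma natDegree_quadPoly_le {R : Type*} [CommRing R] (a b c : R) :
    (quadPoly a b c).natDegree ≤ 2 := by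
  unfold quadPoly
  compute_degree

lemma natDegree_quadPoly_pow_le {R : Type*} [CommRing R] (a b c : R) (l : ℕ) :
    (quadPoly a b c ^ l).natDegree ≤ 2 * l := by
  rw [mul_comm]
  exact natDegree_pow_le_of_le l (natDegree_quadPoly_le a b c)

/-- Rescaling `X` shows that, up to the factor `c ^ m`, the coefficient at `l + m` depends on `a`
and `c` only through `a * c`. -/
lemma coeff_quadPoly_pow_eq {K : Type*} [Field K] (a b c : K) (l m : ℕ) :
    (quadPoly a b c ^ l).coeff (l + m) = c ^ m * (quadPoly (a * c) b 1 ^ l).coeff (l + m) := by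
  rcases eq_or_ne c 0 with rfl | hc
  · rcases Nat.eq_zero_or_pos m with rfl | hm
    · have h1 : quadPoly a b 0 = C b * X + C a := by simp [quadPoly]; ring
      have h2 : quadPoly (a * 0) b 1 = (X + C b) * X := by simp [quadPoly]; ring
      have h3 := coeff_pow_of_natDegree_le (p := C b * X + C a) (n := 1) (m := l)
        (by compute_degree)
      rw [h1, h2, mul_pow]
      simp only [mul_one] at h3
      simp [h3, coeff_mul_X_pow', coeff_X_add_C_pow]
    · have h1 : quadPoly a b 0 = C b * X + C a := by simp [quadPoly]; ring
      rw [zero_pow hm.ne', zero_mul, h1]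
      apply coeff_eq_zero_of_natDegree_lt
      calc _ ≤ l * 1 := natDegree_pow_le_of_le l (by compute_degree)
        _ < l + m := by omega
  -- For `c ≠ 0`, substituting `c X` for `X` in `a c + b X + X²` gives `c (a + b X + c X²)`.
  · have h : (quadPoly (a * c) b 1 ^ l).comp (C c * X) = C (c ^ l) * quadPoly a b c ^ l := by
      rw [pow_comp, C_pow, ← mul_pow]
      congr 1
      simp [quadPoly]
      ring
    have h' := congrArg (fun p => p.coeff (l + m)) h
    simp only [comp_C_mul_X_coeff, coeff_C_mul] at h'
    apply mul_left_cancel₀ (pow_ne_zero l hc)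
    rw [← h', pow_add]
    ring

lemma coeff_quadPoly_pow_reverse {R : Type*} [CommRing R] (a b c : R) (l j : ℕ)
    (hj : j ≤ 2 * l) :
    (quadPoly a b c ^ l).coeff (2 * l - j) = (quadPoly c b a ^ l).coeff j := by
  have key : ∀ n, reflect (2 * n) (quadPoly a b c ^ n) = quadPoly c b a ^ n := by
    intro n
    induction n with
    | zero => simp
    | succ n ih =>
      rw [pow_succ, mul_add, mul_one, reflect_mul _ _ (natDegree_quadPoly_pow_le a b c n)
        (natDegree_quadPoly_le a b c), ih, pow_succ]
      congr 1
      ext i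
      rw [coeff_reflect]
      rcases Nat.lt_or_ge 2 i with hi | hi
      · rw [revAt_eq_self_of_lt hi,
          coeff_eq_zero_of_natDegree_lt ((natDegree_quadPoly_le a b c).trans_lt hi),
          coeff_eq_zero_of_natDegree_lt ((natDegree_quadPoly_le c b a).trans_lt hi)]
      · rw [revAt_le hi]
        interval_cases i <;> simp [quadPoly, coeff_X, coeff_C, coeff_X_pow]
  rw [← key l, coeff_reflect, revAt_le hj]

/-- Homogenization commutes with powers: the coefficients of `(a + b X + c X²) ^ l` expand the
`l`-th power of the quadratic form `a v² + b u v + c u²`. -/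
lemma quadPoly_hom_pow {R S : Type*} [CommRing R] [CommRing S] [Algebra R S] (a b c : R) (u v : S)
    (l : ℕ) :
    (algebraMap R S a * v ^ 2 + algebraMap R S b * (u * v) + algebraMap R S c * u ^ 2) ^ l =
      ∑ j ∈ Finset.range (2 * l + 1),
        algebraMap R S ((quadPoly a b c ^ l).coeff j) * (u ^ j * v ^ (2 * l - j)) := by
  have h := homogenize_finsetProd (s := Finset.range l) (p := fun _ => quadPoly a b c)
    (n := fun _ => 2) (fun _ _ => natDegree_quadPoly_le a b c)
  have hq : homogenize (quadPoly a b c) 2 = MvPolynomial.C a * MvPolynomial.X 1 ^ 2 +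
      MvPolynomial.C b * (MvPolynomial.X 0 * MvPolynomial.X 1) +
      MvPolynomial.C c * MvPolynomial.X 0 ^ 2 := by
    simp [quadPoly]
  simp only [Finset.prod_const, Finset.sum_const, Finset.card_range, smul_eq_mul] at h
  have h' := congrArg (MvPolynomial.aeval ![u, v]) h
  rw [hq, homogenize, Finset.Nat.sum_antidiagonal_eq_sum_range_succ_mk] at h'
  simp [MvPolynomial.algHom_C] at h'
  rw [← h', mul_comm l 2]
  refine Finset.sum_congr rfl fun j _ => ?_
  simp [MvPolynomial.aeval_monomial, Finsupp.prod_fintype]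

/-! ### The pairing of binary forms -/

lemma coeff_linear_pow {R : Type*} [CommRing R] (a b : R) (n k : ℕ) :
    ((C a + C b * X) ^ n).coeff k = n.choose k * a ^ (n - k) * b ^ k := by
  have h : (C a + C b * X) ^ n = ((X + C a) ^ n).comp (C b * X) := by
    rw [pow_comp]; simp [add_comm]
  rw [h, comp_C_mul_X_coeff, coeff_X_add_C_pow]
  ring

lemma choose_identity (l j p : ℕ) (hj : j ≤ 2 * l) (hpl : p ≤ l) (hpj : p ≤ j) :
    l.factorial ^ 2 * (j.choose p * (2 * l - j).choose (l - p)) =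
      j.factorial * (2 * l - j).factorial * (l.choose p * l.choose (j - p)) := by
  by_cases h : j ≤ l + p
  · have h1 := Nat.choose_mul_factorial_mul_factorial hpj
    have h2 := Nat.choose_mul_factorial_mul_factorial (show l - p ≤ 2 * l - j by omega)
    have h3 := Nat.choose_mul_factorial_mul_factorial hpl
    have h4 := Nat.choose_mul_factorial_mul_factorial (show j - p ≤ l by omega)
    have e : 2 * l - j - (l - p) = l - (j - p) := by omega
    rw [e] at h2
    rw [← h1, ← h2]
    calc _ = l.factorial * l.factorial * (j.choose p * (2 * l - j).choose (l - p)) := by ring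
      _ = _ := by
        nth_rewrite 1 [← h3]
        rw [← h4]
        ring
  · rw [Nat.choose_eq_zero_of_lt (show 2 * l - j < l - p by omega),
      Nat.choose_eq_zero_of_lt (show l < j - p by omega)]
    simp

/-- The pairing identity for monomials: with `u = a₁ + b₁ X` and `v = a₂ + b₂ X`, the `l`-th
coefficient of `u ^ j * v ^ (2 * l - j)` is, up to factorials, the `j`-th coefficient of the product
of `l`-th powers of the transposed linear polynomials `a₂ + a₁ X` and `b₂ + b₁ X`. -/
lemma coeff_pairing {R : Type*} [CommRing R] (a₁ a₂ b₁ b₂ : R) (l j : ℕ) (hj : j ≤ 2 * l) :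
    (l.factorial : R) ^ 2 *
        ((C a₁ + C b₁ * X) ^ j * (C a₂ + C b₂ * X) ^ (2 * l - j)).coeff l =
      j.factorial * (2 * l - j).factorial *
        ((C a₂ + C a₁ * X) ^ l * (C b₂ + C b₁ * X) ^ l).coeff j := by
  rw [mul_comm ((C a₂ + C a₁ * X) ^ l)]
  simp only [coeff_mul, coeff_linear_pow]
  rw [Finset.Nat.sum_antidiagonal_eq_sum_range_succ_mk,
    Finset.Nat.sum_antidiagonal_eq_sum_range_succ_mk]
  rw [← Finset.sum_subset (s₁ := Finset.range (min l j + 1)) (s₂ := Finset.range (l + 1)),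
    ← Finset.sum_subset (s₁ := Finset.range (min l j + 1)) (s₂ := Finset.range (j + 1)),
    Finset.mul_sum, Finset.mul_sum]
  · refine Finset.sum_congr rfl fun p hp => ?_
    have hpl : p ≤ l := by simp at hp; omega
    have hpj : p ≤ j := by simp at hp; omega
    have h := congrArg (Nat.cast : ℕ → R) (choose_identity l j p hj hpl hpj)
    push_cast at h
    by_cases hh : j ≤ l + p
    · have e : 2 * l - j - (l - p) = l - (j - p) := by omega
      have e' : l - (j - p) = l + p - j := by omega
      rw [e]
      linear_combination (a₁ ^ (j - p) * b₁ ^ p * a₂ ^ (l - (j - p)) * b₂ ^ (l - p)) * h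
    · rw [Nat.choose_eq_zero_of_lt (show 2 * l - j < l - p by omega),
        Nat.choose_eq_zero_of_lt (show l < j - p by omega)]
      simp
  · intro p
    simp only [Finset.mem_range]
    omega
  · intro p h1 h2
    rw [Nat.choose_eq_zero_of_lt (show l < p by simp at h1 h2; omega)]
    simp
  · intro p
    simp only [Finset.mem_range]
    omega
  · intro p h1 h2
    rw [Nat.choose_eq_zero_of_lt (show j < p by simp at h1 h2; omega)]
    simp

/-! ### Legendre polynomials as coefficients -/

lemma iteratedDeriv_polynomial (p : ℝ[X]) (n : ℕ) :
    iteratedDeriv n (fun x => p.eval x) = fun x => (derivative^[n] p).eval x := by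
  induction n with
  | zero => simp
  | succ n ih =>
    rw [iteratedDeriv_succ, ih, Function.iterate_succ_apply']
    ext x
    simp

/-- Rodrigues' formula read through Taylor's formula, as
`quadPoly (x ^ 2 - 1) (2 * x) 1 = (X + x) ^ 2 - 1`. -/
lemma iteratedDeriv_legendreP (l m : ℕ) (x : ℝ) :
    iteratedDeriv m (legendreP l) x = ((l + m).factorial : ℝ) / (2 ^ l * l.factorial) *
      (quadPoly (x ^ 2 - 1) (2 * x) 1 ^ l).coeff (l + m) := by
  have h0 : (fun y : ℝ => (y ^ 2 - 1) ^ l) = fun y => ((X ^ 2 - 1 : ℝ[X]) ^ l).eval y := by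
    simp
  have h1 : legendreP l = fun y => (C (1 / (2 ^ l * l.factorial : ℝ)) *
      derivative^[l] ((X ^ 2 - 1 : ℝ[X]) ^ l)).eval y := by
    ext y
    rw [legendreP, h0, iteratedDeriv_polynomial]
    simp
  have h2 : quadPoly (x ^ 2 - 1) (2 * x) 1 ^ l = taylor x ((X ^ 2 - 1 : ℝ[X]) ^ l) := by
    rw [taylor_pow]
    congr 1
    have hC : (C 2 : ℝ[X]) = 2 := rfl
    simp [quadPoly, taylor_apply, hC]
    ring
  have h3 := congrArg (fun p => eval x p)
    (congrFun (factorial_smul_hasseDeriv (R := ℝ) (l + m)) ((X ^ 2 - 1 : ℝ[X]) ^ l))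
  rw [h1, iteratedDeriv_polynomial, iterate_derivative_C_mul, ← Function.iterate_add_apply,
    h2, taylor_coeff, add_comm m l]
  simp at h3
  simp only [eval_mul, eval_C]
  rw [← h3]
  ring

lemma coeff_quadPoly_legendre (l m : ℕ) (x : ℝ) (a c : ℂ) (hac : a * c = (x : ℂ) ^ 2 - 1) :
    (quadPoly a (2 * x) c ^ l).coeff (l + m) =
      c ^ m * (2 ^ l * l.factorial / (l + m).factorial *
        (iteratedDeriv m (legendreP l) x : ℝ)) := by
  have hmap : quadPoly (a * c) (2 * (x : ℂ)) 1 =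
      (quadPoly (x ^ 2 - 1) (2 * x) 1).map Complex.ofRealHom := by
    simp [quadPoly, hac]
  rw [coeff_quadPoly_pow_eq, hmap, ← Polynomial.map_pow, coeff_map, iteratedDeriv_legendreP]
  have h1 : ((l + m).factorial : ℂ) ≠ 0 := by exact_mod_cast (l + m).factorial_ne_zero
  have h2 : (l.factorial : ℂ) ≠ 0 := by exact_mod_cast l.factorial_ne_zero
  push_cast
  simp only [Complex.ofRealHom_eq_coe]
  field_simp

lemma coeff_quadPoly_legendre_symm (l m : ℕ) (hm : m ≤ l) (x : ℝ) (a c : ℂ)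
    (hac : a * c = (x : ℂ) ^ 2 - 1) :
    (quadPoly a (2 * x) c ^ l).coeff (l - m) =
      a ^ m * (2 ^ l * l.factorial / (l + m).factorial *
        (iteratedDeriv m (legendreP l) x : ℝ)) := by
  rw [← coeff_quadPoly_legendre l m x c a (by rw [mul_comm, hac]),
    ← coeff_quadPoly_pow_reverse a _ c l (l + m) (by omega)]
  congr 1
  omega

/-! ### The addition theorem for coefficients -/

/-- The addition theorem in terms of coefficients of `l`-th powers of quadratic polynomials. -/
lemma legendreP_eq_sum_coeff (l : ℕ) (θ θ' ψ : ℝ) :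
    (2 : ℂ) ^ l * l.factorial ^ 2 * 2 ^ l *
        (legendreP l (Real.cos θ * Real.cos θ' + Real.sin θ * Real.sin θ' * Real.cos ψ) : ℝ) =
      ∑ j ∈ Finset.range (2 * l + 1), (j.factorial * (2 * l - j).factorial : ℂ) *
        ((quadPoly (-Complex.I * Real.sin θ * Complex.exp (-(Complex.I * ψ)))
            (2 * (Real.cos θ : ℝ)) (-Complex.I * Real.sin θ * Complex.exp (Complex.I * ψ)) ^ l).coeff j *
          (quadPoly (Complex.I * Real.sin θ') (2 * (Real.cos θ' : ℝ))
            (Complex.I * Real.sin θ') ^ l).coeff j) := by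
  set Z : ℝ := Real.cos θ * Real.cos θ' + Real.sin θ * Real.sin θ' * Real.cos ψ with hZ
  obtain ⟨s, hs⟩ : ∃ s : ℂ, s = Real.sin θ := ⟨_, rfl⟩
  obtain ⟨x, hx⟩ : ∃ x : ℂ, x = Real.cos θ := ⟨_, rfl⟩
  obtain ⟨c, hc⟩ : ∃ c : ℂ, c = Real.cos (θ' / 2) := ⟨_, rfl⟩
  obtain ⟨σ, hσ⟩ : ∃ σ : ℂ, σ = Real.sin (θ' / 2) := ⟨_, rfl⟩
  obtain ⟨e, he⟩ : ∃ e : ℂ, e = Complex.exp (Complex.I * ψ) := ⟨_, rfl⟩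
  obtain ⟨f, hf⟩ : ∃ f : ℂ, f = Complex.exp (-(Complex.I * ψ)) := ⟨_, rfl⟩
  have hI : Complex.I ^ 2 = -1 := Complex.I_sq
  have hef : e * f = 1 := by rw [he, hf, ← Complex.exp_add]; simp
  have hsx : s ^ 2 + x ^ 2 = 1 := by
    rw [hs, hx]; exact_mod_cast Real.sin_sq_add_cos_sq θ
  have hcσ : c ^ 2 + σ ^ 2 = 1 := by
    rw [hc, hσ]; exact_mod_cast Real.cos_sq_add_sin_sq (θ' / 2)
  have hs' : ((Real.sin θ' : ℝ) : ℂ) = 2 * σ * c := by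
    rw [hc, hσ, show θ' = 2 * (θ' / 2) by ring, Real.sin_two_mul]
    push_cast; ring_nf
  have hy : ((Real.cos θ' : ℝ) : ℂ) = c ^ 2 - σ ^ 2 := by
    rw [hc, hσ, show θ' = 2 * (θ' / 2) by ring, Real.cos_two_mul']
    push_cast; ring_nf
  have hψ : 2 * ((Real.cos ψ : ℝ) : ℂ) = e + f := by
    rw [he, hf, Complex.ofReal_cos, Complex.two_cos]
    ring_nf
  have hZc : 2 * (Z : ℂ) = 2 * x * (c ^ 2 - σ ^ 2) + 2 * s * σ * c * (e + f) := by
    rw [hZ, ← hψ, hx, hs]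
    push_cast
    rw [← Complex.ofReal_cos θ', hy, ← Complex.ofReal_sin θ', hs']
    ring
  rw [← hs, ← hx, ← he, ← hf]
  -- The second quadratic factors as twice a product of two linear polynomials.
  have hfac : quadPoly (Complex.I * Real.sin θ') (2 * (Real.cos θ' : ℝ))
      (Complex.I * Real.sin θ') ^ l =
      C (2 ^ l) * ((C (Complex.I * σ) + C c * X) ^ l * (C c + C (Complex.I * σ) * X) ^ l) := by
    rw [C_pow, ← mul_pow, ← mul_pow, hs', hy]
    congr 1
    have hC : C Complex.I ^ 2 = (-1 : ℂ[X]) := by rw [← C_pow, hI]; simp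
    have hC2 : (C 2 : ℂ[X]) = 2 := rfl
    simp only [quadPoly, C_mul, C_sub, C_pow, hC2]
    linear_combination (-2 * C σ ^ 2 * X) * hC
  -- Substituting the two linear forms in the first quadratic.
  set A : ℂ := -Complex.I * s * (f * (Complex.I * σ) ^ 2 + e * c ^ 2)
    + 2 * x * (c * (Complex.I * σ)) with hA
  set D : ℂ := -Complex.I * s * (f * c ^ 2 + e * (Complex.I * σ) ^ 2)
    + 2 * x * (c * (Complex.I * σ)) with hD
  have hAD : A * D = (Z : ℂ) ^ 2 - 1 := by
    have hZ' : (Z : ℂ) = x * (c ^ 2 - σ ^ 2) + s * σ * c * (e + f) := by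
      linear_combination hZc / 2
    have hA' : A = Complex.I * (-s * (e * c ^ 2 - f * σ ^ 2) + 2 * x * c * σ) := by
      linear_combination (-Complex.I * s * f * σ ^ 2) * hI
    have hD' : D = Complex.I * (-s * (f * c ^ 2 - e * σ ^ 2) + 2 * x * c * σ) := by
      linear_combination (-Complex.I * s * e * σ ^ 2) * hI
    -- The discriminant `Z ^ 2 - A * D` is `(x ^ 2 + s ^ 2 * (e * f)) * (c ^ 2 + σ ^ 2) ^ 2 = 1`.
    rw [hZ', hA', hD']
    linear_combination ((-s * (e * c ^ 2 - f * σ ^ 2) + 2 * x * c * σ) *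
      (-s * (f * c ^ 2 - e * σ ^ 2) + 2 * x * c * σ)) * hI
      - (x ^ 2 + s ^ 2 * (e * f)) * (c ^ 2 + σ ^ 2 + 1) * hcσ - s ^ 2 * hef - hsx
  have hsub := quadPoly_hom_pow (S := ℂ[X]) (-Complex.I * s * f) (2 * x) (-Complex.I * s * e)
    (C c + C (Complex.I * σ) * X) (C (Complex.I * σ) + C c * X) l
  have hq : algebraMap ℂ ℂ[X] (-Complex.I * s * f) * (C (Complex.I * σ) + C c * X) ^ 2 +
      algebraMap ℂ ℂ[X] (2 * x) *
        ((C c + C (Complex.I * σ) * X) * (C (Complex.I * σ) + C c * X)) +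
      algebraMap ℂ ℂ[X] (-Complex.I * s * e) * (C c + C (Complex.I * σ) * X) ^ 2 =
      quadPoly A (2 * Z) D := by
    rw [hZc, hA, hD]
    have hC : C Complex.I ^ 2 = (-1 : ℂ[X]) := by rw [← C_pow, hI]; simp
    have hC2 : (C 2 : ℂ[X]) = 2 := rfl
    simp only [quadPoly, C_mul, C_sub, C_pow, C_add, C_neg, ← C_eq_algebraMap, hC2]
    linear_combination ((2 * C x * C σ ^ 2 * X) - 2 * C s * C σ * C c * (C e + C f) * X) * hC
  rw [hq] at hsub
  have hcoef := congrArg (fun p => p.coeff l) hsub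
  have hleg := coeff_quadPoly_legendre l 0 Z A D hAD
  have hl0 : (l.factorial : ℂ) ≠ 0 := by exact_mod_cast l.factorial_ne_zero
  simp only [add_zero, pow_zero, one_mul, iteratedDeriv_zero, mul_div_assoc, div_self hl0,
    mul_one] at hleg
  rw [hleg, finsetSum_coeff] at hcoef
  rw [hfac, show (2 : ℂ) ^ l * l.factorial ^ 2 * 2 ^ l * (legendreP l Z : ℝ) =
    2 ^ l * l.factorial ^ 2 * (2 ^ l * (legendreP l Z : ℝ)) by ring, hcoef, Finset.mul_sum]
  refine Finset.sum_congr rfl fun j hj => ?_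
  have hp := coeff_pairing c (Complex.I * σ) (Complex.I * σ) c l j
    (by simp only [Finset.mem_range] at hj; omega)
  rw [← C_eq_algebraMap, coeff_C_mul, coeff_C_mul]
  linear_combination (2 ^ l *
    (quadPoly (-Complex.I * s * f) (2 * x) (-Complex.I * s * e) ^ l).coeff j) * hp

/-! ### Products of spherical harmonics -/

lemma thetaLM_mul (l n : ℕ) (m : ℤ) (hm : m.natAbs = n) (θ θ' : ℝ)
    (hθ : θ ∈ Set.Icc 0 Real.pi) (hθ' : θ' ∈ Set.Icc 0 Real.pi) :
    thetaLM l m (Real.cos θ) * thetaLM l m (Real.cos θ') =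
      (2 * l + 1) / 2 * (l - n).factorial / (l + n).factorial *
        (Real.sin θ * Real.sin θ') ^ n *
        (iteratedDeriv n (legendreP l) (Real.cos θ) *
          iteratedDeriv n (legendreP l) (Real.cos θ')) := by
  have hs : ∀ t ∈ Set.Icc 0 Real.pi, Real.sqrt (1 - Real.cos t ^ 2) = Real.sin t := by
    intro t ht
    rw [← Real.sin_sq, Real.sqrt_sq (Real.sin_nonneg_of_mem_Icc ht)]
  have hr : Real.sqrt ((2 * l + 1) / 2 * ((l - n).factorial : ℝ) / ((l + n).factorial : ℝ)) ^ 2 =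
      (2 * l + 1) / 2 * (l - n).factorial / (l + n).factorial := Real.sq_sqrt (by positivity)
  unfold thetaLM
  split_ifs with h
  · have : m.toNat = n := by omega
    rw [this, hs θ hθ, hs θ' hθ']
    linear_combination ((Real.sin θ * Real.sin θ') ^ n *
        (iteratedDeriv n (legendreP l) (Real.cos θ) *
          iteratedDeriv n (legendreP l) (Real.cos θ'))) * hr
  · have : (-m).toNat = n := by omega
    have h1 : ((-1 : ℝ) ^ n) ^ 2 = 1 := by rw [← pow_mul, mul_comm, pow_mul]; simp
    rw [this, hs θ hθ, hs θ' hθ']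
    linear_combination (Real.sqrt ((2 * l + 1) / 2 * ((l - n).factorial : ℝ) /
      ((l + n).factorial : ℝ)) ^ 2 * (Real.sin θ ^ n * Real.sin θ' ^ n) *
        (iteratedDeriv n (legendreP l) (Real.cos θ) *
          iteratedDeriv n (legendreP l) (Real.cos θ'))) * h1
        + ((Real.sin θ * Real.sin θ') ^ n *
        (iteratedDeriv n (legendreP l) (Real.cos θ) *
          iteratedDeriv n (legendreP l) (Real.cos θ'))) * hr

lemma sphericalHarmonic_mul_conj (l : ℕ) (m : ℤ) (θ θ' φ φ' : ℝ) :
    sphericalHarmonic l m θ φ * starRingEnd ℂ (sphericalHarmonic l m θ' φ') =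
      1 / (2 * Real.pi) * Complex.exp (Complex.I * (φ - φ' : ℝ)) ^ m *
        ((thetaLM l m (Real.cos θ) * thetaLM l m (Real.cos θ') : ℝ) : ℂ) := by
  have hpi : (((1 / Real.sqrt (2 * Real.pi) : ℝ) : ℂ)) ^ 2 = 1 / (2 * Real.pi) := by
    rw [← Complex.ofReal_pow, div_pow, Real.sq_sqrt (by positivity)]
    push_cast
    ring
  have hexp : Complex.exp (Complex.I * m * φ) * Complex.exp (-Complex.I * m * φ') =
      Complex.exp (Complex.I * (φ - φ' : ℝ)) ^ m := by
    rw [← Complex.exp_add, ← Complex.exp_int_mul]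
    congr 1
    push_cast
    ring
  simp only [sphericalHarmonic, map_mul, Complex.conj_ofReal, ← Complex.exp_conj, Complex.conj_I,
    map_intCast]
  rw [← hpi, ← hexp, Complex.ofReal_mul]
  ring

/-- Addition theorem for spherical harmonics:
`Σ_{m=−l}^{l} Y_{lm}(θ,φ)·conj(Y_{lm}(θ',φ')) =
  ((2l+1)/(4π))·P_l(cos θ cos θ' + sin θ sin θ' cos(φ − φ'))`. -/
theorem sphericalHarmonic_addition_theorem (l : ℕ) (θ θ' φ φ' : ℝ)
    (hθ : θ ∈ Set.Icc 0 Real.pi) (hθ' : θ' ∈ Set.Icc 0 Real.pi)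
    (hφ : φ ∈ Set.Icc 0 (2 * Real.pi)) (hφ' : φ' ∈ Set.Icc 0 (2 * Real.pi)) :
    ∑ m ∈ Finset.Icc (-(l : ℤ)) (l : ℤ),
        sphericalHarmonic l m θ φ * starRingEnd ℂ (sphericalHarmonic l m θ' φ') =
      (((2 * l + 1) / (4 * Real.pi) *
        legendreP l (Real.cos θ * Real.cos θ' +
          Real.sin θ * Real.sin θ' * Real.cos (φ - φ')) : ℝ) : ℂ) := by
  have hl : (l.factorial : ℂ) ≠ 0 := by exact_mod_cast l.factorial_ne_zero
  have hpi : (Real.pi : ℂ) ≠ 0 := by exact_mod_cast Real.pi_ne_zero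
  -- Reindexing by `j = m + l`.
  have hsum : ∑ m ∈ Finset.Icc (-(l : ℤ)) (l : ℤ),
        sphericalHarmonic l m θ φ * starRingEnd ℂ (sphericalHarmonic l m θ' φ') =
      ∑ j ∈ Finset.range (2 * l + 1), sphericalHarmonic l ((j : ℤ) - l) θ φ *
        starRingEnd ℂ (sphericalHarmonic l ((j : ℤ) - l) θ' φ') := by
    symm
    refine Finset.sum_bij (fun j _ => (j : ℤ) - l) ?_ ?_ ?_ (fun _ _ => rfl)
    · intro j hj
      simp only [Finset.mem_range, Finset.mem_Icc] at *
      omega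
    · intro a _ b _ h
      omega
    · intro m hm
      simp only [Finset.mem_Icc] at hm
      exact ⟨(m + l).toNat, by simp only [Finset.mem_range]; omega, by omega⟩
  have hmain := legendreP_eq_sum_coeff l θ θ' (φ - φ')
  rw [hsum, Complex.ofReal_mul]
  have hK : (2 : ℂ) ^ l * l.factorial ^ 2 * 2 ^ l ≠ 0 := by simp [l.factorial_ne_zero]
  apply mul_left_cancel₀ hK
  rw [mul_left_comm, hmain, Finset.mul_sum, Finset.mul_sum]
  refine Finset.sum_congr rfl fun j hj => ?_
  have hj' : j ≤ 2 * l := by simp only [Finset.mem_range] at hj; omega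
  have hI : Complex.I ^ 2 = -1 := Complex.I_sq
  have hsin : ∀ t : ℝ, ((Real.sin t : ℝ) : ℂ) ^ 2 = 1 - ((Real.cos t : ℝ) : ℂ) ^ 2 := by
    intro t
    exact_mod_cast Real.sin_sq t
  have hexp : Complex.exp (-(Complex.I * (φ - φ' : ℝ))) *
      Complex.exp (Complex.I * (φ - φ' : ℝ)) = 1 := by
    rw [← Complex.exp_add]; simp
  have hac : (-Complex.I * Real.sin θ * Complex.exp (-(Complex.I * (φ - φ' : ℝ)))) *
      (-Complex.I * Real.sin θ * Complex.exp (Complex.I * (φ - φ' : ℝ))) =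
      ((Real.cos θ : ℝ) : ℂ) ^ 2 - 1 := by
    linear_combination (Complex.I ^ 2 * (Real.sin θ : ℂ) ^ 2) * hexp
      + (Real.sin θ : ℂ) ^ 2 * hI - hsin θ
  have hac' : (Complex.I * Real.sin θ') * (Complex.I * Real.sin θ') =
      ((Real.cos θ' : ℝ) : ℂ) ^ 2 - 1 := by
    linear_combination (Real.sin θ' : ℂ) ^ 2 * hI - hsin θ'
  have hII : ∀ n : ℕ, (-Complex.I) ^ n = (Complex.I ^ n)⁻¹ := by
    intro n
    rw [← inv_pow, Complex.inv_I]
  rw [sphericalHarmonic_mul_conj]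
  rcases le_total l j with hlj | hlj
  · obtain ⟨n, rfl⟩ := Nat.exists_eq_add_of_le hlj
    have hf : ((l + n).factorial : ℂ) ≠ 0 := by exact_mod_cast (l + n).factorial_ne_zero
    rw [thetaLM_mul l n _ (by omega) θ θ' hθ hθ', coeff_quadPoly_legendre l n _ _ _ hac,
      coeff_quadPoly_legendre l n _ _ _ hac', show 2 * l - (l + n) = l - n by omega,
      show ((l + n : ℕ) : ℤ) - l = (n : ℤ) by push_cast; ring, zpow_natCast]
    push_cast
    simp only [mul_pow, hII n]
    field_simp
    ring
  · obtain ⟨n, hn, rfl⟩ : ∃ n, n ≤ l ∧ j = l - n := ⟨l - j, by omega, by omega⟩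
    have hf : ((l + n).factorial : ℂ) ≠ 0 := by exact_mod_cast (l + n).factorial_ne_zero
    rw [thetaLM_mul l n _ (by omega) θ θ' hθ hθ', coeff_quadPoly_legendre_symm l n hn _ _ _ hac,
      coeff_quadPoly_legendre_symm l n hn _ _ _ hac', show 2 * l - (l - n) = l + n by omega,
      show ((l - n : ℕ) : ℤ) - l = -(n : ℤ) by omega, zpow_neg, zpow_natCast, Complex.exp_neg]
    push_cast
    simp only [mul_pow, hII n, inv_pow]
    field_simp
    ring
end
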